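/- arXiv:2111.02311 — 4 statements merged into one kernel-verified Lean document; each statement's English description precedes it below -/
import Mathlib

section
/- Let n ≥ 1 and μ > 0. Let M, A ∈ ℝ^{n×n} be symmetric with A positive semidefinite and xᵀM x ≥ μ|x|² for all x ∈ ℝⁿ (Euclidean norm), and let D ∈ ℝ^{n×n} satisfy xᵀD x ≥ 0 for every x ∈ ℝⁿ. Let S : [0,∞) → ℝⁿ be continuous and let X : [0,∞) → ℝⁿ be twice continuously differentiable with M·X''(t) + D·X'(t) + A·X(t) = S(t) for all t ≥ 0. Then the energy E(t) = X'(t)ᵀM X'(t) + X(t)ᵀA X(t) satisfies the stability estimate √(E(t)) ≤ √(E(0)) + μ^{−1/2} ∫₀ᵗ |S(s)| ds for all t ≥ 0. -/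
open Matrix

lemma aux_dot {n : ℕ} {u v : ℝ → Fin n → ℝ} {u' v' : Fin n → ℝ} {s : Set ℝ} {t : ℝ}
    (hu : HasDerivWithinAt u u' s t) (hv : HasDerivWithinAt v v' s t) :
    HasDerivWithinAt (fun t => u t ⬝ᵥ v t) (u' ⬝ᵥ v t + u t ⬝ᵥ v') s t := by
  have h : HasDerivWithinAt (fun t => ∑ i, u t i * v t i)
      (∑ i, (u' i * v t i + u t i * v' i)) s t :=
    HasDerivWithinAt.fun_sum fun i _ =>
      ((hasDerivWithinAt_pi.1 hu) i).mul ((hasDerivWithinAt_pi.1 hv) i)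
  rw [Finset.sum_add_distrib] at h
  exact h

lemma aux_mulVec {n : ℕ} (B : Matrix (Fin n) (Fin n) ℝ) {u : ℝ → Fin n → ℝ} {u' : Fin n → ℝ}
    {s : Set ℝ} {t : ℝ} (hu : HasDerivWithinAt u u' s t) :
    HasDerivWithinAt (fun t => B *ᵥ u t) (B *ᵥ u') s t :=
  (LinearMap.toContinuousLinearMap B.mulVecLin).hasFDerivAt.comp_hasDerivWithinAt t hu

lemma aux_quad {n : ℕ} (B : Matrix (Fin n) (Fin n) ℝ) (hB : B.IsSymm) {u : ℝ → Fin n → ℝ}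
    {u' : Fin n → ℝ} {s : Set ℝ} {t : ℝ} (hu : HasDerivWithinAt u u' s t) :
    HasDerivWithinAt (fun t => u t ⬝ᵥ B *ᵥ u t) (2 * (u t ⬝ᵥ B *ᵥ u')) s t := by
  have h := aux_dot hu (aux_mulVec B hu)
  have e : u' ⬝ᵥ B *ᵥ u t = u t ⬝ᵥ B *ᵥ u' := by
    rw [dotProduct_mulVec, ← mulVec_transpose, hB.eq, dotProduct_comm]
  rw [e, ← two_mul] at h
  exact h

lemma aux_cs {n : ℕ} (x y : Fin n → ℝ) :
    x ⬝ᵥ y ≤ Real.sqrt (x ⬝ᵥ x) * Real.sqrt (y ⬝ᵥ y) := by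
  have h := Real.sum_mul_le_sqrt_mul_sqrt Finset.univ x y
  simpa [dotProduct, pow_two] using h

/-- Stability estimate for the forced semi-discrete system:
if `M, A` are symmetric, `A` positive semidefinite, `xᵀMx ≥ μ|x|²` (Euclidean
norm, `μ > 0`), `xᵀDx ≥ 0`, `S` continuous and `M X'' + D X' + A X = S` on
`[0,∞)`, then the energy `E(t) = X'(t)ᵀ M X'(t) + X(t)ᵀ A X(t)` satisfies
`√E(t) ≤ √E(0) + μ^{−1/2} ∫₀ᵗ |S(s)| ds` for all `t ≥ 0`. -/
theorem semidiscrete_energy_stability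
    (n : ℕ) (hn : 1 ≤ n) (μ : ℝ) (hμ : 0 < μ)
    (M A D : Matrix (Fin n) (Fin n) ℝ)
    (hMsymm : M.IsSymm) (hAsymm : A.IsSymm) (hA : A.PosSemidef)
    (hM : ∀ x : Fin n → ℝ, μ * (x ⬝ᵥ x) ≤ x ⬝ᵥ M.mulVec x)
    (hD : ∀ x : Fin n → ℝ, 0 ≤ x ⬝ᵥ D.mulVec x)
    (S : ℝ → Fin n → ℝ) (hS : ContinuousOn S (Set.Ici (0 : ℝ)))
    (X X' X'' : ℝ → Fin n → ℝ)
    (hX : ∀ t ∈ Set.Ici (0 : ℝ), HasDerivWithinAt X (X' t) (Set.Ici 0) t)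
    (hX' : ∀ t ∈ Set.Ici (0 : ℝ), HasDerivWithinAt X' (X'' t) (Set.Ici 0) t)
    (hX'' : ContinuousOn X'' (Set.Ici (0 : ℝ)))
    (heq : ∀ t, 0 ≤ t →
      M.mulVec (X'' t) + D.mulVec (X' t) + A.mulVec (X t) = S t) :
    ∀ t, 0 ≤ t →
      Real.sqrt (X' t ⬝ᵥ M.mulVec (X' t) + X t ⬝ᵥ A.mulVec (X t))
        ≤ Real.sqrt (X' 0 ⬝ᵥ M.mulVec (X' 0) + X 0 ⬝ᵥ A.mulVec (X 0))
          + (Real.sqrt μ)⁻¹ * ∫ s in (0 : ℝ)..t, Real.sqrt (S s ⬝ᵥ S s) := by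
  set E : ℝ → ℝ := fun t => X' t ⬝ᵥ M.mulVec (X' t) + X t ⬝ᵥ A.mulVec (X t) with hE
  have hxx : ∀ x : Fin n → ℝ, 0 ≤ x ⬝ᵥ x := fun x =>
    Finset.sum_nonneg fun i _ => mul_self_nonneg _
  have hA0 : ∀ x : Fin n → ℝ, 0 ≤ x ⬝ᵥ A.mulVec x := fun x => by
    simpa using hA.dotProduct_mulVec_nonneg x
  have hE1 : ∀ t, μ * (X' t ⬝ᵥ X' t) ≤ E t := fun t => by
    have := hM (X' t)
    have := hA0 (X t)
    simp only [hE]; linarith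
  have hE0 : ∀ t, 0 ≤ E t := fun t => (mul_nonneg hμ.le (hxx _)).trans (hE1 t)
  have hdE : ∀ t ∈ Set.Ici (0 : ℝ), HasDerivWithinAt E
      (2 * (X' t ⬝ᵥ S t - X' t ⬝ᵥ D *ᵥ X' t)) (Set.Ici 0) t := by
    intro t ht
    have h := (aux_quad M hMsymm (hX' t ht)).add (aux_quad A hAsymm (hX t ht))
    refine h.congr_deriv ?_
    have e : X t ⬝ᵥ A *ᵥ X' t = X' t ⬝ᵥ A *ᵥ X t := by
      rw [dotProduct_mulVec, ← mulVec_transpose, hAsymm.eq, dotProduct_comm]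
    rw [e, ← heq t ht, dotProduct_add, dotProduct_add]
    ring
  set g : ℝ → ℝ := fun s => Real.sqrt (S (max s 0) ⬝ᵥ S (max s 0)) with hg
  have hgc : Continuous g := by
    have h1 : Continuous fun s : ℝ => S (max s 0) :=
      hS.comp_continuous (by fun_prop) fun s => Set.mem_Ici.2 (le_max_right _ _)
    exact Real.continuous_sqrt.comp (h1.dotProduct h1)
  have hdI : ∀ t, HasDerivAt (fun t => ∫ s in (0 : ℝ)..t, g s) (g t) t := fun t =>
    intervalIntegral.integral_hasDerivAt_right (hgc.intervalIntegrable _ _)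
      hgc.stronglyMeasurable.stronglyMeasurableAtFilter hgc.continuousAt
  have hsm : 0 < Real.sqrt μ := Real.sqrt_pos.2 hμ
  have key : ∀ ε > 0, ∀ t, 0 ≤ t → Real.sqrt (E t + ε) ≤ Real.sqrt (E 0 + ε)
      + (Real.sqrt μ)⁻¹ * ∫ s in (0 : ℝ)..t, g s := by
    intro ε hε t ht
    have hdF : ∀ t ∈ Set.Ici (0 : ℝ), HasDerivWithinAt
        (fun t => Real.sqrt (E t + ε) - (Real.sqrt μ)⁻¹ * ∫ s in (0 : ℝ)..t, g s)
        (2 * (X' t ⬝ᵥ S t - X' t ⬝ᵥ D *ᵥ X' t) / (2 * Real.sqrt (E t + ε))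
          - (Real.sqrt μ)⁻¹ * g t) (Set.Ici 0) t := fun t ht =>
      (((hdE t ht).add_const ε).sqrt (by have := hE0 t; positivity)).sub
        ((hdI t).hasDerivWithinAt.const_mul _)
    have hanti : AntitoneOn
        (fun t => Real.sqrt (E t + ε) - (Real.sqrt μ)⁻¹ * ∫ s in (0 : ℝ)..t, g s)
        (Set.Ici 0) := by
      refine antitoneOn_of_hasDerivWithinAt_nonpos (convex_Ici 0)
        (fun t ht => (hdF t ht).continuousWithinAt)
        (fun t ht => (hdF t (interior_subset ht)).mono interior_subset) ?_
      intro t ht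
      have ht0 : (0 : ℝ) ≤ t := interior_subset ht
      have hF : 0 < Real.sqrt (E t + ε) := Real.sqrt_pos.2 (by have := hE0 t; positivity)
      have hgt : g t = Real.sqrt (S t ⬝ᵥ S t) := by simp only [hg, max_eq_left ht0]
      have h1 := aux_cs (X' t) (S t)
      have h2 := hD (X' t)
      have h3 : Real.sqrt μ * Real.sqrt (X' t ⬝ᵥ X' t) ≤ Real.sqrt (E t + ε) := by
        rw [← Real.sqrt_mul hμ.le]
        exact Real.sqrt_le_sqrt (by linarith [hE1 t])
      rw [← hgt] at h1
      have hg0 : 0 ≤ g t := Real.sqrt_nonneg _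
      rw [mul_div_mul_left _ _ two_ne_zero, sub_nonpos, div_le_iff₀ hF]
      have h4 : Real.sqrt (X' t ⬝ᵥ X' t) ≤ (Real.sqrt μ)⁻¹ * Real.sqrt (E t + ε) := by
        rw [inv_mul_eq_div, le_div_iff₀ hsm]; linarith
      have h5 := mul_le_mul_of_nonneg_right h4 hg0
      linarith
    have := hanti (Set.mem_Ici.2 le_rfl) (Set.mem_Ici.2 ht) ht
    simp only [intervalIntegral.integral_same, mul_zero, sub_zero] at this
    linarith
  intro t ht
  have hI : ∫ s in (0 : ℝ)..t, Real.sqrt (S s ⬝ᵥ S s) = ∫ s in (0 : ℝ)..t, g s := by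
    refine intervalIntegral.integral_congr fun s hs => ?_
    rw [Set.uIcc_of_le ht] at hs
    simp only [hg, max_eq_left hs.1]
  rw [hI]
  change Real.sqrt (E t) ≤ Real.sqrt (E 0) + _
  have hc : ∀ a : ℝ, Filter.Tendsto (fun ε : ℝ => Real.sqrt (a + ε)) (nhdsWithin 0 (Set.Ioi 0))
      (nhds (Real.sqrt a)) := fun a => by
    have h : Continuous fun ε : ℝ => Real.sqrt (a + ε) := by fun_prop
    have h' := (h.tendsto 0).mono_left (nhdsWithin_le_nhds (s := Set.Ioi (0 : ℝ)))
    simpa using h'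
  refine le_of_tendsto_of_tendsto (hc (E t)) ((hc (E 0)).add_const _) ?_
  filter_upwards [self_mem_nhdsWithin] with ε hε
  exact key ε hε t ht
end

section
/- Let T > 0, let E : [0,T] → ℝ be differentiable with E(t) ≥ 0 for all t, and let g : [0,T] → ℝ be continuous with g(t) ≥ 0 for all t. If E'(t) ≤ 2 g(t) √(E(t)) for all t ∈ [0,T], then √(E(t)) ≤ √(E(0)) + ∫₀ᵗ g(s) ds for all t ∈ [0,T]. -/
/-- Square-root Gronwall lemma: if `E ≥ 0` is differentiable
on `[0,T]`, `g ≥ 0` is continuous on `[0,T]`, and `E' ≤ 2 g √E` on `[0,T]`,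
then `√E(t) ≤ √E(0) + ∫₀ᵗ g(s) ds` for all `t ∈ [0,T]`. -/
theorem sqrt_gronwall
    (T : ℝ) (hT : 0 < T)
    (E E' g : ℝ → ℝ)
    (hE : ∀ t ∈ Set.Icc (0 : ℝ) T, HasDerivWithinAt E (E' t) (Set.Icc 0 T) t)
    (hEpos : ∀ t ∈ Set.Icc (0 : ℝ) T, 0 ≤ E t)
    (hg : ContinuousOn g (Set.Icc 0 T))
    (hgpos : ∀ t ∈ Set.Icc (0 : ℝ) T, 0 ≤ g t)
    (hE' : ∀ t ∈ Set.Icc (0 : ℝ) T, E' t ≤ 2 * g t * Real.sqrt (E t)) :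
    ∀ t ∈ Set.Icc (0 : ℝ) T,
      Real.sqrt (E t) ≤ Real.sqrt (E 0) + ∫ s in (0 : ℝ)..t, g s := by
  intro t ht
  have key : ∀ δ : ℝ, 0 < δ →
      Real.sqrt (E t) ≤ (Real.sqrt (E 0) + ∫ s in (0 : ℝ)..t, g s) + δ := by
    intro δ hδ
    have hδ2 : 0 < δ ^ 2 := by positivity
    have hI : ∀ x ∈ Set.Icc (0 : ℝ) T,
        HasDerivWithinAt (fun u => ∫ s in (0 : ℝ)..u, g s) (g x) (Set.Icc 0 T) x := by
      intro x hx
      have : Fact (x ∈ Set.Icc (0 : ℝ) T) := ⟨hx⟩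
      refine intervalIntegral.integral_hasDerivWithinAt_right ?_
        (t := Set.Icc 0 T) ?_ (hg x hx)
      · apply ContinuousOn.intervalIntegrable
        rw [Set.uIcc_of_le hx.1]
        exact hg.mono (Set.Icc_subset_Icc_right hx.2)
      · exact hg.stronglyMeasurableAtFilter_nhdsWithin measurableSet_Icc x
    have hF : ∀ x ∈ Set.Icc (0 : ℝ) T,
        HasDerivWithinAt (fun u => Real.sqrt (E u + δ ^ 2))
          (E' x / (2 * Real.sqrt (E x + δ ^ 2))) (Set.Icc 0 T) x := by
      intro x hx
      have := hEpos x hx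
      exact ((hE x hx).add_const (δ ^ 2)).sqrt (by positivity)
    have hB : ∀ x ∈ Set.Icc (0 : ℝ) T,
        HasDerivWithinAt (fun u => Real.sqrt (E 0 + δ ^ 2) + ∫ s in (0 : ℝ)..u, g s)
          (g x) (Set.Icc 0 T) x := fun x hx => (hI x hx).const_add _
    have hmem : ∀ x ∈ Set.Ico (0 : ℝ) T, Set.Icc (0 : ℝ) T ∈ nhdsWithin x (Set.Ici x) :=
      fun x hx => Filter.mem_of_superset (Icc_mem_nhdsGE hx.2) (Set.Icc_subset_Icc_left hx.1)
    have main := image_le_of_deriv_right_le_deriv_boundary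
      (fun x hx => (hF x hx).continuousWithinAt)
      (fun x hx => (hF x (Set.Ico_subset_Icc_self hx)).mono_of_mem_nhdsWithin (hmem x hx))
      (by simp)
      (fun x hx => (hB x hx).continuousWithinAt)
      (fun x hx => (hB x (Set.Ico_subset_Icc_self hx)).mono_of_mem_nhdsWithin (hmem x hx))
      (by
        intro x hx
        have hx := Set.Ico_subset_Icc_self hx
        have h0 := hEpos x hx
        have h1 : 0 < Real.sqrt (E x + δ ^ 2) := by positivity
        have h2 : Real.sqrt (E x) ≤ Real.sqrt (E x + δ ^ 2) := Real.sqrt_le_sqrt (by linarith)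
        rw [div_le_iff₀ (by positivity)]
        have h3 := mul_le_mul_of_nonneg_left h2 (hgpos x hx)
        have h4 := hE' x hx
        linarith) ht
    have h5 : Real.sqrt (E t) ≤ Real.sqrt (E t + δ ^ 2) := Real.sqrt_le_sqrt (by linarith)
    have h6 : Real.sqrt (E 0 + δ ^ 2) ≤ Real.sqrt (E 0) + δ := by
      have h0 := hEpos 0 ⟨le_rfl, hT.le⟩
      have hs := Real.sqrt_nonneg (E 0)
      rw [Real.sqrt_le_left (by positivity)]
      nlinarith [Real.sq_sqrt h0, mul_nonneg hs hδ.le]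
    linarith
  exact le_of_forall_pos_le_add key
end

section
/- Let n ≥ 1, let M, A ∈ ℝ^{n×n} be symmetric matrices with M invertible, and let Δt > 0. Let (X^k)_{k≥0}, (Z^k)_{k≥0} be sequences in ℝⁿ satisfying the Newmark scheme with parameters γ_N = 1/2, β_N = 1/4 applied to the undamped unforced system M·X'' + A·X = 0, i.e. with L^k = −M⁻¹A X^k: X^{k+1} = X^k + Δt·Z^k + (Δt²/4)(L^{k+1} + L^k) and Z^{k+1} = Z^k + (Δt/2)(L^{k+1} + L^k) for all k ≥ 0. Then the discrete energy E^k = (Z^k)ᵀM Z^k + (X^k)ᵀA X^k is exactly conserved: E^{k+1} = E^k for every k ≥ 0 and every choice of Δt > 0 (unconditional stability when M and A are positive definite). -/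
open Matrix

/-- Exact discrete energy conservation of the Newmark scheme
with `γ_N = 1/2`, `β_N = 1/4` applied to the undamped unforced system
`M X'' + A X = 0` (so `L^k = −M⁻¹ A X^k`): the discrete energy
`E^k = (Z^k)ᵀ M Z^k + (X^k)ᵀ A X^k` satisfies `E^{k+1} = E^k` for every `k`
and every `Δt > 0`. -/
theorem newmark_average_acceleration_energy_conservation
    (n : ℕ) (hn : 1 ≤ n)
    (M A : Matrix (Fin n) (Fin n) ℝ)
    (hM : M.IsSymm) (hA : A.IsSymm) (hMinv : IsUnit M.det)
    (Δt : ℝ) (hΔt : 0 < Δt)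
    (X Z L : ℕ → Fin n → ℝ)
    (hL : ∀ k, L k = -(M⁻¹.mulVec (A.mulVec (X k))))
    (hX : ∀ k, X (k + 1) = X k + Δt • Z k + (Δt ^ 2 / 4) • (L (k + 1) + L k))
    (hZ : ∀ k, Z (k + 1) = Z k + (Δt / 2) • (L (k + 1) + L k)) :
    ∀ k, Z (k + 1) ⬝ᵥ M.mulVec (Z (k + 1)) + X (k + 1) ⬝ᵥ A.mulVec (X (k + 1))
      = Z k ⬝ᵥ M.mulVec (Z k) + X k ⬝ᵥ A.mulVec (X k) := by
  intro k
  have symm : ∀ B : Matrix (Fin n) (Fin n) ℝ, B.IsSymm → ∀ u v : Fin n → ℝ,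
      u ⬝ᵥ B.mulVec v = v ⬝ᵥ B.mulVec u := by
    intro B hB u v
    rw [Matrix.dotProduct_mulVec, ← Matrix.mulVec_transpose, hB.eq, dotProduct_comm]
  have diff : ∀ B : Matrix (Fin n) (Fin n) ℝ, B.IsSymm → ∀ u v : Fin n → ℝ,
      u ⬝ᵥ B.mulVec u - v ⬝ᵥ B.mulVec v = (u - v) ⬝ᵥ B.mulVec (u + v) := by
    intro B hB u v
    rw [Matrix.mulVec_add, dotProduct_add, sub_dotProduct, sub_dotProduct, symm B hB u v]
    ring
  have hML : ∀ j, M.mulVec (L j) = -(A.mulVec (X j)) := by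
    intro j
    rw [hL j, Matrix.mulVec_neg, Matrix.mulVec_mulVec, Matrix.mul_nonsing_inv M hMinv,
      Matrix.one_mulVec]
  have hS : M.mulVec (L (k + 1) + L k) = -(A.mulVec (X (k + 1) + X k)) := by
    rw [Matrix.mulVec_add, Matrix.mulVec_add, hML, hML, neg_add]
  have hdZ : Z (k + 1) - Z k = (Δt / 2) • (L (k + 1) + L k) := by
    rw [hZ k, add_sub_cancel_left]
  have hdX : X (k + 1) - X k = (Δt / 2) • (Z (k + 1) + Z k) := by
    rw [hZ k, hX k]
    ext i
    simp only [Pi.add_apply, Pi.sub_apply, Pi.smul_apply, smul_eq_mul]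
    ring
  have h1 := diff M hM (Z (k + 1)) (Z k)
  have h2 := diff A hA (X (k + 1)) (X k)
  rw [hdZ, smul_dotProduct, symm M hM (L (k + 1) + L k), hS, dotProduct_neg, smul_eq_mul] at h1
  rw [hdX, smul_dotProduct, smul_eq_mul] at h2
  linarith
end

section
/- Let n₁, n₂ ≥ 1, n = n₁ + n₂, and T > 0. Write vectors X ∈ ℝⁿ as X = (X₁, X₂) with X₁ ∈ ℝ^{n₁}, X₂ ∈ ℝ^{n₂}. Let M, A, D ∈ ℝ^{n×n} with M symmetric positive definite and A symmetric positive semidefinite; let M₁ ∈ ℝ^{n₁×n₁} and B ∈ ℝ^{n₂×n₂} be symmetric positive definite; and assume XᵀM X ≥ 2·X₁ᵀM₁X₁ and XᵀD X ≥ X₂ᵀB X₂ for all X = (X₁,X₂) ∈ ℝⁿ. Let F : [0,T] → ℝ^{n₁} and G : [0,T] → ℝ^{n₂} be continuous, set S = (F, G), and let X : [0,T] → ℝⁿ be twice continuously differentiable with M·X''(t) + D·X'(t) + A·X(t) = S(t) for all t ∈ [0,T]. Then, with E(t) = X'(t)ᵀM X'(t) + X(t)ᵀA X(t), the following stability estimate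 holds: max_{t ∈ [0,T]} [ E(t) + ∫₀ᵗ X'(s)ᵀD X'(s) ds ] ≤ 2·[ E(0) + T·∫₀ᵀ F(s)ᵀM₁⁻¹F(s) ds + ∫₀ᵀ G(s)ᵀB⁻¹G(s) ds ]. -/
open Matrix

theorem aux_young {n : ℕ} (P : Matrix (Fin n) (Fin n) ℝ) (hP : P.PosDef) (c : ℝ) (hc : 0 < c)
    (a b : Fin n → ℝ) :
    2 * (b ⬝ᵥ a) ≤ c * (a ⬝ᵥ P⁻¹.mulVec a) + c⁻¹ * (b ⬝ᵥ P.mulVec b) := by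
  have hu : IsUnit P.det := hP.isUnit.map Matrix.detMonoidHom
  have h := hP.posSemidef.dotProduct_mulVec_nonneg (c • P⁻¹.mulVec a - b)
  have hPa : P.mulVec (P⁻¹.mulVec a) = a := by
    rw [Matrix.mulVec_mulVec, Matrix.mul_nonsing_inv _ hu, Matrix.one_mulVec]
  have hsym : (P⁻¹.mulVec a) ⬝ᵥ P.mulVec b = b ⬝ᵥ a := by
    have ht : Pᵀ = P := by simpa using hP.isHermitian.eq
    rw [Matrix.dotProduct_mulVec, ← Matrix.mulVec_transpose, ht, hPa, dotProduct_comm]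
  have hcm : (P⁻¹.mulVec a) ⬝ᵥ a = a ⬝ᵥ P⁻¹.mulVec a := dotProduct_comm _ _
  simp only [star_trivial, Matrix.mulVec_sub, Matrix.mulVec_smul, hPa, sub_dotProduct,
    dotProduct_sub, smul_dotProduct, dotProduct_smul, smul_eq_mul, hsym, hcm] at h
  have h2 := mul_nonneg (inv_nonneg.2 hc.le) h
  have e : c⁻¹ * (c * (c * (a ⬝ᵥ P⁻¹.mulVec a) ) - c * (b ⬝ᵥ a)
      - (c * (b ⬝ᵥ a) - b ⬝ᵥ P.mulVec b))
      = c * (a ⬝ᵥ P⁻¹.mulVec a) - 2 * (b ⬝ᵥ a) + c⁻¹ * (b ⬝ᵥ P.mulVec b) := by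
    field_simp
    ring
  have h3 : 0 ≤ c * (a ⬝ᵥ P⁻¹.mulVec a) - 2 * (b ⬝ᵥ a) + c⁻¹ * (b ⬝ᵥ P.mulVec b) := by
    rw [← e]
    refine h2.trans (le_of_eq ?_)
    ring
  linarith

theorem aux_cont {ι : Type*} [Fintype ι] (N : Matrix ι ι ℝ) (f : ℝ → ι → ℝ) (s : Set ℝ)
    (hf : ContinuousOn f s) : ContinuousOn (fun t => f t ⬝ᵥ N.mulVec (f t)) s := by
  have : Continuous (fun v : ι → ℝ => v ⬝ᵥ N.mulVec v) := by
    exact continuous_id.dotProduct (continuous_const.matrix_mulVec continuous_id)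
  exact this.comp_continuousOn hf

theorem aux_deriv {ι : Type*} [Fintype ι] (N : Matrix ι ι ℝ) (hN : Nᵀ = N) (f : ℝ → ι → ℝ)
    (f' : ι → ℝ) (s : Set ℝ) (t : ℝ) (hf : HasDerivWithinAt f f' s t) :
    HasDerivWithinAt (fun t => f t ⬝ᵥ N.mulVec (f t)) (2 * (f' ⬝ᵥ N.mulVec (f t))) s t := by
  have hc := hasDerivWithinAt_pi.1 hf
  have h1 : HasDerivWithinAt (fun t => f t ⬝ᵥ N.mulVec (f t))
      (∑ i, (f' i * (N.mulVec (f t)) i + f t i * (N.mulVec f') i)) s t := by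
    simp only [dotProduct]
    refine HasDerivWithinAt.fun_sum fun i _ => (hc i).fun_mul ?_
    simp only [mulVec, dotProduct]
    exact HasDerivWithinAt.fun_sum fun j _ => (hc j).const_mul _
  convert h1 using 1
  rw [Finset.sum_add_distrib]
  change _ = f' ⬝ᵥ N.mulVec (f t) + f t ⬝ᵥ N.mulVec f'
  have : f t ⬝ᵥ N.mulVec f' = f' ⬝ᵥ N.mulVec (f t) := by
    rw [Matrix.dotProduct_mulVec, ← Matrix.mulVec_transpose, hN, dotProduct_comm]
  rw [this]; ring

/-- Blockwise stability estimate for the semi-discrete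
poro-elastic(-acoustic) system. Vectors in `ℝⁿ`, `n = n₁ + n₂`, are indexed by
`Fin n₁ ⊕ Fin n₂`, `X = (X₁, X₂)` with `X₁ = X ∘ Sum.inl`, `X₂ = X ∘ Sum.inr`.
Assume `M` symmetric positive definite, `A` symmetric positive semidefinite,
`M₁, B` symmetric positive definite with `XᵀMX ≥ 2 X₁ᵀM₁X₁` and
`XᵀDX ≥ X₂ᵀBX₂`, `F, G` continuous, `S = (F,G)`, and
`M X'' + D X' + A X = S` on `[0,T]`. Then, with
`E(t) = X'(t)ᵀM X'(t) + X(t)ᵀA X(t)`,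
`max_{t∈[0,T]} [E(t) + ∫₀ᵗ X'ᵀD X' ds] ≤
  2[E(0) + T ∫₀ᵀ FᵀM₁⁻¹F ds + ∫₀ᵀ GᵀB⁻¹G ds]`. -/
theorem poroelastic_blockwise_stability
    (n₁ n₂ : ℕ) (hn₁ : 1 ≤ n₁) (hn₂ : 1 ≤ n₂)
    (T : ℝ) (hT : 0 < T)
    (M A D : Matrix (Fin n₁ ⊕ Fin n₂) (Fin n₁ ⊕ Fin n₂) ℝ)
    (hM : M.PosDef) (hA : A.PosSemidef)
    (M₁ : Matrix (Fin n₁) (Fin n₁) ℝ) (B : Matrix (Fin n₂) (Fin n₂) ℝ)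
    (hM₁ : M₁.PosDef) (hB : B.PosDef)
    (hMdom : ∀ x : Fin n₁ ⊕ Fin n₂ → ℝ,
      2 * ((x ∘ Sum.inl) ⬝ᵥ M₁.mulVec (x ∘ Sum.inl)) ≤ x ⬝ᵥ M.mulVec x)
    (hDdom : ∀ x : Fin n₁ ⊕ Fin n₂ → ℝ,
      (x ∘ Sum.inr) ⬝ᵥ B.mulVec (x ∘ Sum.inr) ≤ x ⬝ᵥ D.mulVec x)
    (F : ℝ → Fin n₁ → ℝ) (G : ℝ → Fin n₂ → ℝ)
    (hF : ContinuousOn F (Set.Icc 0 T)) (hG : ContinuousOn G (Set.Icc 0 T))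
    (X X' X'' : ℝ → Fin n₁ ⊕ Fin n₂ → ℝ)
    (hX : ∀ t ∈ Set.Icc (0 : ℝ) T, HasDerivWithinAt X (X' t) (Set.Icc 0 T) t)
    (hX' : ∀ t ∈ Set.Icc (0 : ℝ) T, HasDerivWithinAt X' (X'' t) (Set.Icc 0 T) t)
    (hX'' : ContinuousOn X'' (Set.Icc 0 T))
    (heq : ∀ t ∈ Set.Icc (0 : ℝ) T,
      M.mulVec (X'' t) + D.mulVec (X' t) + A.mulVec (X t)
        = Sum.elim (F t) (G t)) :
    ∀ t ∈ Set.Icc (0 : ℝ) T,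
      (X' t ⬝ᵥ M.mulVec (X' t) + X t ⬝ᵥ A.mulVec (X t))
          + (∫ s in (0 : ℝ)..t, X' s ⬝ᵥ D.mulVec (X' s))
        ≤ 2 * ((X' 0 ⬝ᵥ M.mulVec (X' 0) + X 0 ⬝ᵥ A.mulVec (X 0))
            + T * (∫ s in (0 : ℝ)..T, F s ⬝ᵥ M₁⁻¹.mulVec (F s))
            + ∫ s in (0 : ℝ)..T, G s ⬝ᵥ B⁻¹.mulVec (G s)) := by
  have hMt : Mᵀ = M := by simpa using hM.isHermitian.eq
  have hAt : Aᵀ = A := by simpa using hA.isHermitian.eq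
  have hXc : ContinuousOn X (Set.Icc 0 T) := fun t ht => (hX t ht).continuousWithinAt
  have hX'c : ContinuousOn X' (Set.Icc 0 T) := fun t ht => (hX' t ht).continuousWithinAt
  set E : ℝ → ℝ := fun t => X' t ⬝ᵥ M.mulVec (X' t) + X t ⬝ᵥ A.mulVec (X t) with hE
  set d : ℝ → ℝ := fun s => X' s ⬝ᵥ D.mulVec (X' s) with hd
  set f : ℝ → ℝ := fun s => F s ⬝ᵥ M₁⁻¹.mulVec (F s) with hf
  set g : ℝ → ℝ := fun s => G s ⬝ᵥ B⁻¹.mulVec (G s) with hg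
  have hEc : ContinuousOn E (Set.Icc 0 T) := (aux_cont M X' _ hX'c).add (aux_cont A X _ hXc)
  have hdc : ContinuousOn d (Set.Icc 0 T) := aux_cont D X' _ hX'c
  have hfc : ContinuousOn f (Set.Icc 0 T) := aux_cont _ F _ hF
  have hgc : ContinuousOn g (Set.Icc 0 T) := aux_cont _ G _ hG
  have hd0 : ∀ s, 0 ≤ d s := fun s => by
    have h := hB.posSemidef.dotProduct_mulVec_nonneg (X' s ∘ Sum.inr)
    rw [star_trivial] at h
    exact h.trans (hDdom (X' s))
  have hf0 : ∀ s, 0 ≤ f s := fun s => by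
    have h := hM₁.inv.posSemidef.dotProduct_mulVec_nonneg (F s)
    rwa [star_trivial] at h
  have hg0 : ∀ s, 0 ≤ g s := fun s => by
    have h := hB.inv.posSemidef.dotProduct_mulVec_nonneg (G s)
    rwa [star_trivial] at h
  have hA0 : ∀ s, 0 ≤ X s ⬝ᵥ A.mulVec (X s) := fun s => by
    have h := hA.dotProduct_mulVec_nonneg (X s)
    rwa [star_trivial] at h
  have hM0 : ∀ s, 0 ≤ X' s ⬝ᵥ M.mulVec (X' s) := fun s => by
    have h := hM.posSemidef.dotProduct_mulVec_nonneg (X' s)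
    rwa [star_trivial] at h
  set p : ℝ → ℝ := fun s =>
    2 * (X'' s ⬝ᵥ M.mulVec (X' s)) + 2 * (X' s ⬝ᵥ A.mulVec (X s)) with hp
  have hEd : ∀ t ∈ Set.Icc (0 : ℝ) T, HasDerivWithinAt E (p t) (Set.Icc 0 T) t := fun t ht =>
    (aux_deriv M hMt X' _ _ t (hX' t ht)).add (aux_deriv A hAt X _ _ t (hX t ht))
  have hpc : ContinuousOn p (Set.Icc 0 T) := by
    have c1 : Continuous (fun v : (Fin n₁ ⊕ Fin n₂ → ℝ) × (Fin n₁ ⊕ Fin n₂ → ℝ) =>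
        v.1 ⬝ᵥ M.mulVec v.2) :=
      continuous_fst.dotProduct (continuous_const.matrix_mulVec continuous_snd)
    have c2 : Continuous (fun v : (Fin n₁ ⊕ Fin n₂ → ℝ) × (Fin n₁ ⊕ Fin n₂ → ℝ) =>
        v.1 ⬝ᵥ A.mulVec v.2) :=
      continuous_fst.dotProduct (continuous_const.matrix_mulVec continuous_snd)
    exact ((c1.comp_continuousOn (hX''.prodMk hX'c)).const_mul 2).add
      ((c2.comp_continuousOn (hX'c.prodMk hXc)).const_mul 2)
  have hint : ∀ {h : ℝ → ℝ}, ContinuousOn h (Set.Icc 0 T) → ∀ t ∈ Set.Icc (0 : ℝ) T,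
      IntervalIntegrable h MeasureTheory.volume 0 t := by
    intro h hh t ht
    refine ContinuousOn.intervalIntegrable ?_
    rw [Set.uIcc_of_le ht.1]
    exact hh.mono (Set.Icc_subset_Icc_right ht.2)
  have hftc : ∀ t ∈ Set.Icc (0 : ℝ) T, ∫ s in (0 : ℝ)..t, p s = E t - E 0 := by
    intro t ht
    refine intervalIntegral.integral_eq_sub_of_hasDeriv_right_of_le ht.1
      (hEc.mono (Set.Icc_subset_Icc_right ht.2)) ?_ (hint hpc t ht)
    intro x hx
    have hxT : x < T := hx.2.trans_le ht.2
    have hm : Set.Icc 0 T ∈ nhds x := Icc_mem_nhds hx.1 hxT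
    exact ((hEd x ⟨hx.1.le, hxT.le⟩).hasDerivAt hm).hasDerivWithinAt
  -- pointwise bound
  have hpt : ∀ s ∈ Set.Icc (0 : ℝ) T, p s + d s ≤ T * f s + g s + (2 * T)⁻¹ * E s := by
    intro s hs
    have e1 : X'' s ⬝ᵥ M.mulVec (X' s) = X' s ⬝ᵥ M.mulVec (X'' s) := by
      rw [Matrix.dotProduct_mulVec, ← Matrix.mulVec_transpose, hMt, dotProduct_comm]
    have e2 : X' s ⬝ᵥ M.mulVec (X'' s) + d s + X' s ⬝ᵥ A.mulVec (X s)
        = (X' s ∘ Sum.inl) ⬝ᵥ F s + (X' s ∘ Sum.inr) ⬝ᵥ G s := by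
      have h := congrArg (fun v => X' s ⬝ᵥ v) (heq s hs)
      simp only [dotProduct_add] at h
      rw [hd]
      refine h.trans ?_
      simp [dotProduct, Fintype.sum_sum_type]
    have y1 := aux_young M₁ hM₁ T hT (F s) (X' s ∘ Sum.inl)
    have y2 := aux_young B hB 1 one_pos (G s) (X' s ∘ Sum.inr)
    have m1 := mul_le_mul_of_nonneg_left (hMdom (X' s)) (inv_nonneg.2 (mul_pos two_pos hT).le)
    have d1 := hDdom (X' s)
    have m2 := mul_nonneg (inv_nonneg.2 (mul_pos two_pos hT).le) (hA0 s)
    have e3 : (2 * T)⁻¹ * (2 * ((X' s ∘ Sum.inl) ⬝ᵥ M₁.mulVec (X' s ∘ Sum.inl)))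
        = T⁻¹ * ((X' s ∘ Sum.inl) ⬝ᵥ M₁.mulVec (X' s ∘ Sum.inl)) := by
      field_simp
    simp only [hp, hE, hf, hg, hd] at *
    rw [e3] at m1
    rw [mul_add, e1]
    simp only [inv_one, one_mul] at y2
    linarith
  have hΦc : ContinuousOn (fun t => E t + ∫ s in (0 : ℝ)..t, d s) (Set.Icc 0 T) := by
    refine hEc.add ?_
    have h := intervalIntegral.continuousOn_primitive_interval (μ := MeasureTheory.volume)
      (f := d) (a := 0) (b := T) ?_
    · rwa [Set.uIcc_of_le hT.le] at h
    · rw [Set.uIcc_of_le hT.le]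
      exact hdc.integrableOn_Icc
  obtain ⟨t₀, ht₀, hmax⟩ := isCompact_Icc.exists_isMaxOn
    (Set.nonempty_Icc.2 hT.le) hΦc
  set m : ℝ := E t₀ + ∫ s in (0 : ℝ)..t₀, d s with hm
  have hmax' : ∀ t ∈ Set.Icc (0 : ℝ) T, E t + ∫ s in (0 : ℝ)..t, d s ≤ m := fun t ht => hmax ht
  have hEm : ∀ t ∈ Set.Icc (0 : ℝ) T, E t ≤ m := fun t ht => by
    have h1 := hmax' t ht
    have h2 : 0 ≤ ∫ s in (0 : ℝ)..t, d s :=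
      intervalIntegral.integral_nonneg ht.1 fun s _ => hd0 s
    linarith
  have hm0 : 0 ≤ m := (add_nonneg (hM0 t₀) (hA0 t₀)).trans (hEm t₀ ht₀)
  have hTm : T ∈ Set.Icc (0 : ℝ) T := ⟨hT.le, le_rfl⟩
  set q : ℝ → ℝ := fun s => T * f s + g s + (2 * T)⁻¹ * m with hq
  have hqc : ContinuousOn q (Set.Icc 0 T) :=
    ((hfc.const_mul T).add hgc).add continuousOn_const
  have hT2 : 0 ≤ (2 * T)⁻¹ := inv_nonneg.2 (mul_pos two_pos hT).le
  have hq0 : ∀ s, 0 ≤ q s := fun s =>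
    add_nonneg (add_nonneg (mul_nonneg hT.le (hf0 s)) (hg0 s)) (mul_nonneg hT2 hm0)
  have hbound : m ≤ E 0 + ∫ s in (0 : ℝ)..T, q s := by
    have i1 : ∫ s in (0 : ℝ)..t₀, (p s + d s) ≤ ∫ s in (0 : ℝ)..t₀, q s := by
      refine intervalIntegral.integral_mono_on ht₀.1 ((hint hpc t₀ ht₀).add (hint hdc t₀ ht₀))
        (hint hqc t₀ ht₀) fun s hs => ?_
      have hs' : s ∈ Set.Icc (0 : ℝ) T := ⟨hs.1, hs.2.trans ht₀.2⟩
      have := mul_le_mul_of_nonneg_left (hEm s hs') hT2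
      have := hpt s hs'
      simp only [hq]
      linarith
    rw [intervalIntegral.integral_add (hint hpc t₀ ht₀) (hint hdc t₀ ht₀), hftc t₀ ht₀] at i1
    have i2 : ∫ s in (0 : ℝ)..t₀, q s ≤ ∫ s in (0 : ℝ)..T, q s :=
      intervalIntegral.integral_mono_interval le_rfl ht₀.1 ht₀.2
        (Filter.Eventually.of_forall hq0) (hint hqc T hTm)
    linarith
  have hqi : ∫ s in (0 : ℝ)..T, q s
      = T * (∫ s in (0 : ℝ)..T, f s) + (∫ s in (0 : ℝ)..T, g s) + m / 2 := by
    have a1 := (hint hfc T hTm).const_mul T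
    have a2 := hint hgc T hTm
    simp only [hq]
    rw [intervalIntegral.integral_add (a1.add a2) intervalIntegrable_const,
      intervalIntegral.integral_add a1 a2, intervalIntegral.integral_const_mul,
      intervalIntegral.integral_const, smul_eq_mul]
    congr 1
    field_simp
    ring
  intro t ht
  have h1 := hmax' t ht
  rw [hqi] at hbound
  change E t + (∫ s in (0 : ℝ)..t, d s) ≤ 2 * (E 0 + T * (∫ s in (0 : ℝ)..T, f s)
    + ∫ s in (0 : ℝ)..T, g s)
  linarith
end
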